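/- For k₋ = (√6-√2)/4, the complete elliptic integral of the second kind satisfies E(k₋) = 2^(1/3)·3^(-3/4)·π²·Γ(1/3)^(-3) + 2^(-10/3)·3^(-1/4)·π^(-1)·(√3 + 1)·Γ(1/3)³. -/

import Mathlib

open Real MeasureTheory

/-- The complete elliptic integral of the second kind,
`E(k) = ∫₀^{π/2} √(1 - k² sin²θ) dθ`. -/
noncomputable def ellipticE (k : ℝ) : ℝ :=
  ∫ θ in (0:ℝ)..(π/2), Real.sqrt (1 - k^2 * Real.sin θ ^ 2)

/-!
Legendre's substitution `w = 1 / (1 + r tan²(θ/2))` turns `∫ g(w) dθ / √(1 - k² sin²θ)` over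
`[0, π]` into the integral of `g(w)` over `[0, 1]` against the reciprocal square root of a quartic
in `w`. Differentiating `sin θ √(1 - k² sin²θ) / (1 + cos θ + r (1 - cos θ))` shows that `2 E(k)`
is a linear combination of the integrals `Jₙ` obtained from `g(w) = wⁿ`, `n ≤ 2`, where
`J₀ = 2 K(k)`.

For `k = k₋` and `r = √3` the quartic is `w (1 - w³)`, so that every `Jₙ` is a beta integral, and
the coefficient of `J₁` vanishes. Euler's reflection formula gives `J₀ J₂ = π`, hence `E` is a
combination of `K` and `1 / K`, while `K` itself is a power of `Γ(1/3)` up to elementary factors.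
-/

open ProbabilityTheory (beta)

lemma integral_eq_two_smul_integral_half {E : Type*} [NormedAddCommGroup E] [NormedSpace ℝ E]
    {f : ℝ → E} {a : ℝ} (hf : IntervalIntegrable f volume 0 (a / 2))
    (hsymm : ∀ t, f (a - t) = f t) :
    ∫ t in (0 : ℝ)..a, f t = (2 : ℝ) • ∫ t in (0 : ℝ)..(a / 2), f t := by
  have hreflect : ∫ t in (a / 2)..a, f t = ∫ t in (0 : ℝ)..(a / 2), f t := by
    have h := intervalIntegral.integral_comp_sub_left f a (a := 0) (b := a / 2)
    rwa [sub_half, sub_zero, intervalIntegral.integral_congr fun t _ ↦ hsymm t, eq_comm] at h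
  have hf_right : IntervalIntegrable f volume (a / 2) a := by
    have h := hf.comp_sub_left a
    simp only [hsymm, sub_zero, sub_half] at h
    exact h.symm
  rw [← intervalIntegral.integral_add_adjacent_intervals hf hf_right, hreflect, two_smul]

section Beta

lemma integral_rpow_mul_one_sub_rpow {a b : ℝ} (ha : 0 < a) (hb : 0 < b) :
    ∫ x in (0 : ℝ)..1, x ^ (a - 1) * (1 - x) ^ (b - 1) = beta a b := by
  have hcast : Complex.betaIntegral a b =
      ∫ x in (0 : ℝ)..1, ((x ^ (a - 1) * (1 - x) ^ (b - 1) : ℝ) : ℂ) := by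
    refine intervalIntegral.integral_congr_Ioo_of_le zero_le_one fun x hx ↦ ?_
    push_cast [Complex.ofReal_cpow hx.1.le, Complex.ofReal_cpow (sub_nonneg.2 hx.2.le)]
    rfl
  rw [ProbabilityTheory.beta_eq_betaIntegralReal a b ha hb, hcast,
    intervalIntegral.integral_ofReal, Complex.ofReal_re]

lemma integral_rpow_mul_one_sub_rpow_rpow {a b p : ℝ} (ha : 0 < a) (hb : 0 < b) (hp : 0 < p) :
    ∫ x in (0 : ℝ)..1, x ^ (p * a - 1) * (1 - x ^ p) ^ (b - 1) = beta a b / p := by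
  have hpos : ∀ x ∈ Set.Ioo (min 0 1 : ℝ) (max 0 1), 0 < x := by
    rw [min_eq_left zero_le_one]
    exact fun x hx ↦ hx.1
  have hsubst := intervalIntegral.integral_comp_mul_deriv_of_deriv_nonneg
    (f := fun x : ℝ ↦ x ^ p) (g := fun u ↦ u ^ (a - 1) * (1 - u) ^ (b - 1))
    (continuous_rpow_const hp.le).continuousOn
    (fun x hx ↦ hasDerivAt_rpow_const (.inl (hpos x hx).ne'))
    (fun x hx ↦ mul_nonneg hp.le (rpow_nonneg (hpos x hx).le _))
  rw [zero_rpow hp.ne', one_rpow, integral_rpow_mul_one_sub_rpow ha hb] at hsubst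
  rw [← hsubst, eq_div_iff hp.ne', ← intervalIntegral.integral_mul_const]
  refine intervalIntegral.integral_congr_Ioo_of_le zero_le_one fun x hx ↦ ?_
  have hpow : x ^ (p * a - 1) = (x ^ p) ^ (a - 1) * x ^ (p - 1) := by
    rw [← rpow_mul hx.1.le, ← rpow_add hx.1]
    ring_nf
  simp only [Function.comp_apply, hpow]
  ring

lemma integral_pow_div_sqrt_mul_one_sub_cube (n : ℕ) :
    ∫ w in (0 : ℝ)..1, w ^ n / √(w * (1 - w ^ 3)) = beta ((2 * n + 1) / 6) (1 / 2) / 3 := by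
  rw [← integral_rpow_mul_one_sub_rpow_rpow (by positivity) one_half_pos three_pos]
  refine intervalIntegral.integral_congr_Ioo_of_le zero_le_one fun w hw ↦ ?_
  have hcube : 0 < 1 - w ^ 3 := sub_pos.2 (pow_lt_one₀ hw.1.le hw.2 three_ne_zero)
  simp only [sqrt_eq_rpow]
  rw [mul_rpow hw.1.le hcube.le, ← rpow_natCast w n, ← div_div, ← rpow_sub hw.1,
    div_eq_mul_inv, ← rpow_neg hcube.le, ← rpow_natCast w 3]
  ring_nf

lemma beta_mul_beta_one_sub_one_half {a : ℝ} (ha : a ≠ 1 / 2) :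
    beta a (1 / 2) * beta (1 - a) (1 / 2) = π * cos (π * a) / ((1 / 2 - a) * sin (π * a)) := by
  have hshift : Gamma (1 - a + 1 / 2) = (1 / 2 - a) * Gamma (1 - (a + 1 / 2)) := by
    rw [show 1 - (a + 1 / 2) = 1 / 2 - a by ring, ← Gamma_add_one (sub_ne_zero.2 ha.symm)]
    ring_nf
  have hcos : Gamma (a + 1 / 2) * Gamma (1 - (a + 1 / 2)) = π / cos (π * a) := by
    rw [Gamma_mul_Gamma_one_sub, mul_add, mul_one_div, sin_add_pi_div_two]
  calc beta a (1 / 2) * beta (1 - a) (1 / 2)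
      = Gamma a * Gamma (1 - a) * √π ^ 2 /
          ((1 / 2 - a) * (Gamma (a + 1 / 2) * Gamma (1 - (a + 1 / 2)))) := by
        rw [beta, beta, hshift, Gamma_one_half_eq, div_mul_div_comm]
        ring_nf
    _ = π * cos (π * a) / ((1 / 2 - a) * sin (π * a)) := by
        rw [hcos, Gamma_mul_Gamma_one_sub, sq_sqrt pi_pos.le]
        field_simp

lemma beta_one_sixth_mul_beta_five_sixths :
    beta (1 / 6) (1 / 2) * beta (5 / 6) (1 / 2) = 3 * √3 * π := by
  rw [show (5 / 6 : ℝ) = 1 - 1 / 6 by norm_num, beta_mul_beta_one_sub_one_half (by norm_num),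
    mul_one_div, cos_pi_div_six, sin_pi_div_six]
  ring

lemma Gamma_two_thirds : Gamma (2 / 3) = 2 * π / (√3 * Gamma (1 / 3)) := by
  have h := Gamma_mul_Gamma_one_sub (1 / 3)
  rw [mul_one_div, sin_pi_div_three, show (1 : ℝ) - 1 / 3 = 2 / 3 by norm_num] at h
  field_simp at h ⊢
  linear_combination h

lemma Gamma_one_sixth :
    Gamma (1 / 6) = 2 ^ (2 / 3 : ℝ) * √π * Gamma (1 / 3) / Gamma (2 / 3) := by
  have h := Gamma_mul_Gamma_add_half (1 / 6)
  rw [show (1 / 6 + 1 / 2 : ℝ) = 2 / 3 by norm_num, show (2 * (1 / 6) : ℝ) = 1 / 3 by norm_num,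
    show (1 - 1 / 3 : ℝ) = 2 / 3 by norm_num] at h
  rw [eq_div_iff (by positivity), h]
  ring

lemma beta_one_sixth_one_half :
    beta (1 / 6) (1 / 2) = 3 * 2 ^ (-4 / 3 : ℝ) * π⁻¹ * Gamma (1 / 3) ^ 3 := by
  have hpow : (2 : ℝ) ^ (2 / 3 : ℝ) = 4 * 2 ^ (-4 / 3 : ℝ) := by
    rw [show (2 / 3 : ℝ) = 2 + -4 / 3 by norm_num, rpow_add two_pos]
    norm_num
  rw [beta, Gamma_one_half_eq, show (1 / 6 + 1 / 2 : ℝ) = 2 / 3 by norm_num, Gamma_one_sixth,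
    Gamma_two_thirds, hpow]
  field_simp
  rw [sq_sqrt pi_pos.le, sq_sqrt three_pos.le]
  ring

end Beta

/-- The complete elliptic integral of the first kind
`K(k) = ∫₀^{π/2} dθ / √(1 - k² sin²θ)`, in terms of the modulus `k`. -/
noncomputable def ellipticK (k : ℝ) : ℝ :=
  ∫ θ in (0 : ℝ)..(π / 2), 1 / √(1 - k ^ 2 * sin θ ^ 2)

/-- Legendre's radical `Δ(θ) = √(1 - k² sin²θ)`, in terms of the modulus `k`. -/
noncomputable def legendreDelta (k θ : ℝ) : ℝ := √(1 - k ^ 2 * sin θ ^ 2)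

section LegendreDelta

variable {k : ℝ}

lemma one_sub_mul_sin_sq_pos (hk : k ^ 2 < 1) (θ : ℝ) : 0 < 1 - k ^ 2 * sin θ ^ 2 := by
  nlinarith [sin_sq_le_one θ, sq_nonneg k, sq_nonneg (sin θ)]

lemma legendreDelta_pos (hk : k ^ 2 < 1) (θ : ℝ) : 0 < legendreDelta k θ :=
  sqrt_pos.2 (one_sub_mul_sin_sq_pos hk θ)

lemma legendreDelta_sq (hk : k ^ 2 < 1) (θ : ℝ) :
    legendreDelta k θ ^ 2 = 1 - k ^ 2 * sin θ ^ 2 :=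
  sq_sqrt (one_sub_mul_sin_sq_pos hk θ).le

lemma legendreDelta_pi_sub (k θ : ℝ) : legendreDelta k (π - θ) = legendreDelta k θ := by
  simp only [legendreDelta, sin_pi_sub]

lemma continuous_legendreDelta (k : ℝ) : Continuous (legendreDelta k) := by
  unfold legendreDelta
  fun_prop

lemma continuous_div_legendreDelta (hk : k ^ 2 < 1) {g : ℝ → ℝ} (hg : Continuous g) :
    Continuous fun θ ↦ g θ / legendreDelta k θ :=
  hg.div (continuous_legendreDelta k) fun θ ↦ (legendreDelta_pos hk θ).ne'

lemma hasDerivAt_legendreDelta (hk : k ^ 2 < 1) (θ : ℝ) :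
    HasDerivAt (legendreDelta k) (-(k ^ 2 * sin θ * cos θ) / legendreDelta k θ) θ := by
  have h := ((((hasDerivAt_sin θ).pow 2).const_mul (k ^ 2)).const_sub 1).sqrt
    (one_sub_mul_sin_sq_pos hk θ).ne'
  refine h.congr_deriv ?_
  rw [← mul_div_mul_left _ (legendreDelta k θ) two_ne_zero, legendreDelta]
  congr 1
  ring

lemma integral_legendreDelta_zero_pi (k : ℝ) :
    ∫ θ in (0 : ℝ)..π, legendreDelta k θ = 2 * ellipticE k :=
  integral_eq_two_smul_integral_half ((continuous_legendreDelta k).intervalIntegrable _ _)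
    (legendreDelta_pi_sub k)

lemma integral_one_div_legendreDelta_zero_pi (hk : k ^ 2 < 1) :
    ∫ θ in (0 : ℝ)..π, 1 / legendreDelta k θ = 2 * ellipticK k :=
  integral_eq_two_smul_integral_half
    ((continuous_div_legendreDelta hk continuous_const).intervalIntegrable _ _)
    fun θ ↦ by rw [legendreDelta_pi_sub]

end LegendreDelta

/-- The denominator of the substitution `legendreSubst`. -/
noncomputable def legendreDenom (r θ : ℝ) : ℝ := 1 + cos θ + r * (1 - cos θ)

/-- The substitution `w = 1 / (1 + r tan²(θ/2))`, which maps `[0, π]` onto `[0, 1]` reversing the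
order and brings `dw / √(legendreQuartic k r w)` into Legendre's form. It is written in terms of
`cos θ` so as to be regular at `θ = π`. -/
noncomputable def legendreSubst (r θ : ℝ) : ℝ := (1 + cos θ) / legendreDenom r θ

/-- The quartic in `w` whose square root `legendreSubst` turns into a multiple of
`legendreDelta`. -/
def legendreQuartic (k r w : ℝ) : ℝ :=
  w * (1 - w) * ((1 - w) ^ 2 + (2 - 4 * k ^ 2) * r * w * (1 - w) + r ^ 2 * w ^ 2)

section LegendreSubst

variable {k r : ℝ}

lemma legendreDenom_pos (hr : 0 < r) (θ : ℝ) : 0 < legendreDenom r θ := by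
  unfold legendreDenom
  rcases (neg_one_le_cos θ).eq_or_lt with h | h
  · rw [← h]
    linarith
  · nlinarith [cos_le_one θ]

lemma hasDerivAt_legendreDenom (r θ : ℝ) :
    HasDerivAt (legendreDenom r) ((r - 1) * sin θ) θ :=
  (((hasDerivAt_cos θ).const_add 1).add
    (((hasDerivAt_cos θ).const_sub 1).const_mul r)).congr_deriv (by ring)

lemma hasDerivAt_legendreSubst (hr : 0 < r) (θ : ℝ) :
    HasDerivAt (legendreSubst r) (-(2 * r * sin θ) / legendreDenom r θ ^ 2) θ := by
  refine (((hasDerivAt_cos θ).const_add 1).div (hasDerivAt_legendreDenom r θ)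
    (legendreDenom_pos hr θ).ne').congr_deriv ?_
  rw [legendreDenom]
  ring

lemma continuous_legendreSubst (hr : 0 < r) : Continuous (legendreSubst r) :=
  continuous_iff_continuousAt.2 fun θ ↦ (hasDerivAt_legendreSubst hr θ).continuousAt

lemma one_sub_legendreSubst (hr : 0 < r) (θ : ℝ) :
    1 - legendreSubst r θ = r * (1 - cos θ) / legendreDenom r θ := by
  rw [legendreSubst, one_sub_div (legendreDenom_pos hr θ).ne', legendreDenom]
  ring

lemma legendreQuartic_legendreSubst (hk : k ^ 2 < 1) (hr : 0 < r) (θ : ℝ) :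
    legendreQuartic k r (legendreSubst r θ) =
      r * (2 * r * sin θ * legendreDelta k θ / legendreDenom r θ ^ 2) ^ 2 := by
  have hD := legendreDenom_pos hr θ
  rw [legendreQuartic, one_sub_legendreSubst hr, legendreSubst]
  field_simp
  rw [legendreDelta_sq hk, sin_sq]
  ring

lemma sqrt_legendreQuartic_legendreSubst (hk : k ^ 2 < 1) (hr : 0 < r) {θ : ℝ}
    (hθ : 0 ≤ sin θ) :
    √(legendreQuartic k r (legendreSubst r θ)) =
      √r * (2 * r * sin θ * legendreDelta k θ / legendreDenom r θ ^ 2) := by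
  have hΔ := legendreDelta_pos hk θ
  rw [legendreQuartic_legendreSubst hk hr, sqrt_mul hr.le, sqrt_sq (by positivity)]

lemma integral_comp_legendreSubst_mul (hr : 0 < r) (f : ℝ → ℝ) :
    ∫ θ in (0 : ℝ)..π, f (legendreSubst r θ) * (2 * r * sin θ / legendreDenom r θ ^ 2) =
      ∫ w in (0 : ℝ)..1, f w := by
  have hderiv_nonpos : ∀ θ ∈ Set.Ioo (min 0 π) (max 0 π),
      -(2 * r * sin θ) / legendreDenom r θ ^ 2 ≤ 0 := by
    rw [min_eq_left pi_pos.le, max_eq_right pi_pos.le]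
    intro θ hθ
    have hsin := sin_pos_of_mem_Ioo hθ
    exact div_nonpos_of_nonpos_of_nonneg (neg_nonpos.2 (by positivity)) (sq_nonneg _)
  have h := intervalIntegral.integral_comp_mul_deriv_of_deriv_nonpos (g := f)
    (continuous_legendreSubst hr).continuousOn (fun θ _ ↦ hasDerivAt_legendreSubst hr θ)
    hderiv_nonpos
  have h_zero : legendreSubst r 0 = 1 := by simp [legendreSubst, legendreDenom]
  have h_pi : legendreSubst r π = 0 := by simp [legendreSubst]
  rw [h_zero, h_pi, intervalIntegral.integral_symm 0 1] at h
  simp only [Function.comp_apply, neg_div, mul_neg, intervalIntegral.integral_neg] at h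
  exact neg_injective h

lemma integral_comp_legendreSubst_div_legendreDelta (hk : k ^ 2 < 1) (hr : 0 < r) (g : ℝ → ℝ) :
    ∫ θ in (0 : ℝ)..π, g (legendreSubst r θ) / legendreDelta k θ =
      √r * ∫ w in (0 : ℝ)..1, g w / √(legendreQuartic k r w) := by
  rw [← integral_comp_legendreSubst_mul hr, ← intervalIntegral.integral_const_mul]
  refine intervalIntegral.integral_congr_Ioo_of_le pi_pos.le fun θ hθ ↦ ?_
  have hsin := sin_pos_of_mem_Ioo hθ
  have hΔ := legendreDelta_pos hk θ
  have hD := legendreDenom_pos hr θ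
  simp only [sqrt_legendreQuartic_legendreSubst hk hr hsin.le]
  field_simp

-- The coefficients come from comparing both sides at `cos θ = -1`, at `cos θ = 1`, and at the
-- (complex) zero of `legendreDenom r`.
lemma hasDerivAt_sin_mul_legendreDelta_div_legendreDenom (hk : k ^ 2 < 1) (hr : 0 < r) (θ : ℝ) :
    HasDerivAt (fun θ ↦ (1 - r) * (sin θ * legendreDelta k θ / legendreDenom r θ))
      (legendreDelta k θ -
        ((r + 1) / (2 * r) * (1 / legendreDelta k θ) +
          (((4 * r - r ^ 2 - 3) / (2 * r) - 4 * k ^ 2) *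
              (legendreSubst r θ / legendreDelta k θ) +
            ((r - 1) ^ 2 / r + 4 * k ^ 2) * (legendreSubst r θ ^ 2 / legendreDelta k θ)))) θ := by
  have hD := (legendreDenom_pos hr θ).ne'
  have hΔ := (legendreDelta_pos hk θ).ne'
  have hΔ_sq := legendreDelta_sq hk θ
  rw [sin_sq] at hΔ_sq
  refine ((((hasDerivAt_sin θ).mul (hasDerivAt_legendreDelta hk θ)).div
    (hasDerivAt_legendreDenom r θ) hD).const_mul (1 - r)).congr_deriv ?_
  simp only [Pi.mul_apply, legendreSubst]
  field_simp
  rw [hΔ_sq, sin_sq, legendreDenom]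
  ring

lemma two_mul_ellipticE_eq (hk : k ^ 2 < 1) (hr : 0 < r) :
    2 * ellipticE k =
      (r + 1) / (2 * r) * (2 * ellipticK k) +
        (((4 * r - r ^ 2 - 3) / (2 * r) - 4 * k ^ 2) *
            (∫ θ in (0 : ℝ)..π, legendreSubst r θ / legendreDelta k θ) +
          ((r - 1) ^ 2 / r + 4 * k ^ 2) *
            ∫ θ in (0 : ℝ)..π, legendreSubst r θ ^ 2 / legendreDelta k θ) := by
  have hΔ := continuous_legendreDelta k
  have hW := continuous_legendreSubst hr
  have hK : Continuous fun θ ↦ (r + 1) / (2 * r) * (1 / legendreDelta k θ) :=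
    (continuous_div_legendreDelta hk continuous_const).const_mul _
  have hW₁ := (continuous_div_legendreDelta hk hW).const_mul
    ((4 * r - r ^ 2 - 3) / (2 * r) - 4 * k ^ 2)
  have hW₂ := (continuous_div_legendreDelta hk (hW.pow 2)).const_mul
    ((r - 1) ^ 2 / r + 4 * k ^ 2)
  have h := intervalIntegral.integral_eq_sub_of_hasDerivAt (a := 0) (b := π)
    (fun θ _ ↦ hasDerivAt_sin_mul_legendreDelta_div_legendreDenom hk hr θ)
    ((hΔ.sub (hK.add (hW₁.add hW₂))).intervalIntegrable 0 π)
  rw [intervalIntegral.integral_sub, intervalIntegral.integral_add,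
    intervalIntegral.integral_add] at h
  · simp only [intervalIntegral.integral_const_mul, integral_legendreDelta_zero_pi,
      integral_one_div_legendreDelta_zero_pi hk, sin_pi, sin_zero, zero_mul, zero_div, mul_zero,
      sub_self] at h
    exact sub_eq_zero.1 h
  · exact hW₁.intervalIntegrable 0 π
  · exact hW₂.intervalIntegrable 0 π
  · exact hK.intervalIntegrable 0 π
  · exact (hW₁.add hW₂).intervalIntegrable 0 π
  · exact hΔ.intervalIntegrable 0 π
  · exact (hK.add (hW₁.add hW₂)).intervalIntegrable 0 π

end LegendreSubst

/-- The modulus `k₋ = sin (π / 12)`, which is the singular modulus `k₃`: the one at which the ratio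
of the complementary to the plain complete integral of the first kind is `√3`. -/
noncomputable def singularModulus : ℝ := (√6 - √2) / 4

section SingularModulus

lemma singularModulus_sq : singularModulus ^ 2 = (2 - √3) / 4 := by
  have hsix : √6 = √2 * √3 := by rw [← sqrt_mul zero_le_two]; norm_num
  rw [singularModulus, hsix]
  linear_combination (√3 - 1) ^ 2 / 16 * sq_sqrt zero_le_two + 1 / 8 * sq_sqrt three_pos.le

lemma singularModulus_sq_lt_one : singularModulus ^ 2 < 1 := by
  linarith [singularModulus_sq, sqrt_nonneg 3]

lemma legendreQuartic_singularModulus (w : ℝ) :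
    legendreQuartic singularModulus √3 w = w * (1 - w ^ 3) := by
  rw [legendreQuartic, singularModulus_sq]
  linear_combination w ^ 2 * (1 - w) * sq_sqrt three_pos.le

lemma integral_legendreSubst_pow_div_legendreDelta_singularModulus (n : ℕ) :
    ∫ θ in (0 : ℝ)..π, legendreSubst √3 θ ^ n / legendreDelta singularModulus θ =
      √√3 / 3 * beta ((2 * n + 1) / 6) (1 / 2) := by
  rw [integral_comp_legendreSubst_div_legendreDelta singularModulus_sq_lt_one
    (sqrt_pos.2 three_pos) (· ^ n)]
  simp only [legendreQuartic_singularModulus, integral_pow_div_sqrt_mul_one_sub_cube]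
  ring

lemma two_mul_ellipticK_singularModulus_eq_beta :
    2 * ellipticK singularModulus = √√3 / 3 * beta (1 / 6) (1 / 2) := by
  rw [← integral_one_div_legendreDelta_zero_pi singularModulus_sq_lt_one]
  simpa using integral_legendreSubst_pow_div_legendreDelta_singularModulus 0

lemma ellipticK_singularModulus :
    ellipticK singularModulus =
      2 ^ (-7 / 3 : ℝ) * 3 ^ (1 / 4 : ℝ) * π⁻¹ * Gamma (1 / 3) ^ 3 := by
  have hsqrt : √√3 = (3 : ℝ) ^ (1 / 4 : ℝ) := by
    rw [sqrt_eq_rpow, sqrt_eq_rpow, ← rpow_mul three_pos.le]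
    norm_num
  have hpow : (2 : ℝ) ^ (-4 / 3 : ℝ) = 2 * 2 ^ (-7 / 3 : ℝ) := by
    rw [← rpow_one_add' zero_le_two (by norm_num)]
    norm_num
  have h := two_mul_ellipticK_singularModulus_eq_beta
  rw [beta_one_sixth_one_half, hsqrt, hpow] at h
  linear_combination h / 2

lemma two_mul_ellipticK_mul_integral_singularModulus :
    2 * ellipticK singularModulus *
      ∫ θ in (0 : ℝ)..π, legendreSubst √3 θ ^ 2 / legendreDelta singularModulus θ = π := by
  have hfive : ((2 * (2 : ℕ) + 1 : ℝ)) / 6 = 5 / 6 := by norm_num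
  calc _ = √√3 ^ 2 / 9 * (beta (1 / 6) (1 / 2) * beta (5 / 6) (1 / 2)) := by
        rw [two_mul_ellipticK_singularModulus_eq_beta,
          integral_legendreSubst_pow_div_legendreDelta_singularModulus, hfive]
        ring
    _ = √3 ^ 2 * π / 3 := by
        rw [beta_one_sixth_mul_beta_five_sixths, sq_sqrt (sqrt_nonneg 3)]
        ring
    _ = π := by
        rw [sq_sqrt three_pos.le]
        ring

lemma ellipticE_singularModulus_eq_ellipticK :
    ellipticE singularModulus =
      (√3 + 1) / (2 * √3) * ellipticK singularModulus +
        π / (4 * √3 * ellipticK singularModulus) := by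
  have hcoeff₁ : (4 * √3 - √3 ^ 2 - 3) / (2 * √3) - 4 * singularModulus ^ 2 = 0 := by
    rw [singularModulus_sq]
    field_simp
    linear_combination sq_sqrt three_pos.le
  have hcoeff₂ : (√3 - 1) ^ 2 / √3 + 4 * singularModulus ^ 2 = 1 / √3 := by
    rw [singularModulus_sq]
    field_simp
    ring
  have hKJ := two_mul_ellipticK_mul_integral_singularModulus
  have hK : ellipticK singularModulus ≠ 0 := fun h ↦ by simp [h, pi_ne_zero.symm] at hKJ
  have hE := two_mul_ellipticE_eq singularModulus_sq_lt_one (sqrt_pos.2 three_pos)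
  rw [hcoeff₁, hcoeff₂, zero_mul, zero_add, eq_div_of_mul_eq (by positivity)
    ((mul_comm _ _).trans hKJ)] at hE
  field_simp at hE ⊢
  linear_combination 2 * hE

end SingularModulus

/-- `E(k₋) = 2^(1/3)·3^(-3/4)·π²·Γ(1/3)⁻³ + 2^(-10/3)·3^(-1/4)·π⁻¹·(√3+1)·Γ(1/3)³`
for `k₋ = (√6-√2)/4`. -/
theorem ellipticE_singular_value_minus :
    ellipticE ((Real.sqrt 6 - Real.sqrt 2) / 4) =
      (2:ℝ) ^ ((1:ℝ)/3) * (3:ℝ) ^ (-(3:ℝ)/4) * π ^ 2 * (Real.Gamma (1/3)) ^ (-(3:ℤ)) +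
      (2:ℝ) ^ (-(10:ℝ)/3) * (3:ℝ) ^ (-(1:ℝ)/4) * π⁻¹ * (Real.sqrt 3 + 1) * Real.Gamma (1/3) ^ 3 := by
  have htwo_neg : (2 : ℝ) ^ (-(10 : ℝ) / 3) = 2 ^ (-7 / 3 : ℝ) / 2 := by
    rw [← rpow_sub_one two_ne_zero]
    norm_num
  have htwo_pos : (2 : ℝ) ^ ((1 : ℝ) / 3) = 1 / (2 ^ (2 : ℝ) * 2 ^ (-7 / 3 : ℝ)) := by
    rw [← rpow_add two_pos, one_div (2 ^ _ : ℝ), ← rpow_neg zero_le_two]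
    norm_num
  have hthree_quarter : (3 : ℝ) ^ (-(1 : ℝ) / 4) = 3 ^ (1 / 4 : ℝ) / √3 := by
    rw [sqrt_eq_rpow, ← rpow_sub three_pos]
    norm_num
  have hthree_three_quarters : (3 : ℝ) ^ (-(3 : ℝ) / 4) = 1 / (√3 * 3 ^ (1 / 4 : ℝ)) := by
    rw [sqrt_eq_rpow, ← rpow_add three_pos, one_div, ← rpow_neg three_pos.le]
    norm_num
  rw [← singularModulus, ellipticE_singularModulus_eq_ellipticK, ellipticK_singularModulus,
    htwo_neg, htwo_pos, hthree_quarter, hthree_three_quarters, zpow_neg, rpow_two]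
  field_simp
  ring
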